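/- Let T be a linearly ordered set of timestamps with a distinguished least element ts0. Let W be a finite list of write operations on a single register, each write w carrying a timestamp ts(w) ∈ T with ts(w) > ts0 and a value val(w) ∈ ℤ, with all writes having pairwise distinct timestamps. Let R be a finite list of read operations, each read r carrying a timestamp ts(r) ∈ T and a return value rval(r) ∈ ℤ such that either ts(r) = ts0 and rval(r) = 0, or there exists a write w ∈ W with ts(w) = ts(r) and rval(r) = val(w). Form the sequential history S by ordering the writes in increasing order of timestamp and placing each read with ts(r) = ts0 before all writes and each read with ts(r) = ts(w) immediately after write w and before any write with larger timestamp (reads with equal timestamp ordered by an arbitrary fixed tiebreaking order). Then S is legal: in S, every read returns the value of the closest preceding write, or the initial value 0 if no write precedes it. -/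

import Mathlib

/-- An operation on a single register in the construction of the total order
`S`: it is either a read (`isRead = true`) or a write (`isRead = false`),
carries a timestamp `ts` and a value `value` (the value written by a write,
resp. the value returned by a read).  A sequential history of such operations
is represented as the list of operations in the order in which they occur
(each operation standing for its invocation immediately followed by its
matching response). -/
structure Op (T : Type) where
  isRead : Bool
  ts : T
  value : ℤ

/-- A sequential history of read/write operations on a single register is
legal if every read returns the value written by the closest preceding write,
or the initial value `0` if no write precedes it. -/
def LegalOps {T : Type} (S : List (Op T)) : Prop :=
  ∀ k : Fin S.length, (S.get k).isRead = true →
    ((∃ j : Fin S.length, j < k ∧ (S.get j).isRead = false ∧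
        (S.get j).value = (S.get k).value ∧
        ∀ l : Fin S.length, j < l → l < k → (S.get l).isRead = true) ∨
      ((S.get k).value = 0 ∧ ∀ j : Fin S.length, j < k → (S.get j).isRead = true))

/-!
A write with the timestamp of a read sorts before that read. A write strictly between the two would
have its timestamp squeezed between two equal timestamps, against the distinctness of write
timestamps, so the write a read returns is the closest preceding one. A read of the initial value
has a timestamp below that of every write, so no write can sort before it.
-/

namespace Op

variable {T : Type}

/-- The order in which the constructed history lists its operations: by timestamp, and writes before
reads at equal timestamps. Reads with a common timestamp precede each other, which leaves the
tiebreaking between them free; so do writes. -/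
def Precedes [Preorder T] (a b : Op T) : Prop :=
  a.ts < b.ts ∨ (a.ts = b.ts ∧ ¬(a.isRead = true ∧ b.isRead = false))

/-- The operation `r` takes its value from the write `w`, recognized by its timestamp. That `r` is a
read is not part of the relation. -/
def ReadsFrom (r w : Op T) : Prop :=
  w.isRead = false ∧ w.ts = r.ts ∧ w.value = r.value

/-- The operation `r` takes the initial value `0`, in a history `S` without any write at or below
the timestamp of `r`. That `r` is a read is not part of the relation. -/
def ReadsInitial [Preorder T] (r : Op T) (S : List (Op T)) : Prop :=
  r.value = 0 ∧ ∀ w ∈ S, w.isRead = false → ¬ w.ts ≤ r.ts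

/-- If `a` and `b` are both writes, their timestamps differ. Imposed pairwise on a history, it says
that the writes among its operations have distinct timestamps. -/
def DistinctWrites (a b : Op T) : Prop :=
  a.isRead = false → b.isRead = false → a.ts ≠ b.ts

theorem DistinctWrites.symm {a b : Op T} (h : a.DistinctWrites b) : b.DistinctWrites a :=
  fun hb ha => (h ha hb).symm

theorem pairwise_distinctWrites_append {W R : List (Op T)}
    (hW : W.Pairwise fun w₁ w₂ => w₁.ts ≠ w₂.ts) (hR : ∀ r ∈ R, r.isRead = true) :
    (W ++ R).Pairwise DistinctWrites := by
  have distinctWrites_of_mem_right (a : Op T) : ∀ r ∈ R, a.DistinctWrites r :=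
    fun r hr _ hwrite => absurd (hwrite.symm.trans (hR r hr)) Bool.false_ne_true
  exact List.pairwise_append.2 ⟨hW.imp fun hne _ _ => hne,
    List.pairwise_of_forall_mem_list fun a _ => distinctWrites_of_mem_right a,
    fun a _ => distinctWrites_of_mem_right a⟩

section Preorder

variable [Preorder T]

theorem Precedes.ts_le {a b : Op T} (h : a.Precedes b) : a.ts ≤ b.ts :=
  h.elim le_of_lt fun h => h.1.le

theorem Precedes.ts_lt_of_distinctWrites {a b : Op T} (h : a.Precedes b)
    (hdist : a.DistinctWrites b) (ha : a.isRead = false) (hb : b.isRead = false) : a.ts < b.ts :=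
  h.resolve_right fun h => hdist ha hb h.1

theorem ReadsFrom.not_precedes {r w : Op T} (h : r.ReadsFrom w) (hr : r.isRead = true) :
    ¬ r.Precedes w := by
  rintro (hlt | ⟨-, hnot⟩)
  · exact hlt.ne h.2.1.symm
  · exact hnot ⟨hr, h.1⟩

theorem ReadsFrom.index_lt {S : List (Op T)} (hsorted : S.Pairwise Precedes)
    {j k : Fin S.length} (h : (S.get k).ReadsFrom (S.get j)) (hk : (S.get k).isRead = true) :
    j < k := by
  have hne : j ≠ k := by
    rintro rfl
    exact Bool.false_ne_true (h.1.symm.trans hk)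
  exact hne.lt_of_le (le_of_not_gt fun hkj =>
    h.not_precedes hk (List.pairwise_iff_get.1 hsorted k j hkj))

theorem ReadsFrom.isRead_of_between {S : List (Op T)} (hsorted : S.Pairwise Precedes)
    (hdist : S.Pairwise DistinctWrites) {j k l : Fin S.length}
    (h : (S.get k).ReadsFrom (S.get j)) (hjl : j < l) (hlk : l < k) :
    (S.get l).isRead = true := by
  rw [List.pairwise_iff_get] at hsorted hdist
  by_contra hl
  have hwrite : (S.get l).isRead = false := Bool.eq_false_of_not_eq_true hl
  have hts : (S.get j).ts < (S.get k).ts := calc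
    (S.get j).ts < (S.get l).ts :=
      (hsorted j l hjl).ts_lt_of_distinctWrites (hdist j l hjl) h.1 hwrite
    _ ≤ (S.get k).ts := (hsorted l k hlk).ts_le
  exact hts.ne h.2.1

theorem ReadsInitial.isRead_of_lt {S : List (Op T)} (hsorted : S.Pairwise Precedes)
    {j k : Fin S.length} (h : (S.get k).ReadsInitial S) (hjk : j < k) :
    (S.get j).isRead = true := by
  by_contra hj
  exact h.2 _ (S.get_mem j) (Bool.eq_false_of_not_eq_true hj)
    (List.pairwise_iff_get.1 hsorted j k hjk).ts_le

theorem readsFrom_or_readsInitial_append {ts0 : T} {W R : List (Op T)}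
    (hW : ∀ w ∈ W, w.isRead = false ∧ ts0 < w.ts)
    (hR : ∀ r ∈ R, r.isRead = true ∧
      ((r.ts = ts0 ∧ r.value = 0) ∨ ∃ w ∈ W, w.ts = r.ts ∧ r.value = w.value))
    {r : Op T} (hr : r ∈ W ++ R) (hread : r.isRead = true) :
    (∃ w ∈ W ++ R, r.ReadsFrom w) ∨ r.ReadsInitial (W ++ R) := by
  have hrR : r ∈ R := (List.mem_append.1 hr).resolve_left fun hrW =>
    Bool.false_ne_true ((hW r hrW).1.symm.trans hread)
  rcases (hR r hrR).2 with ⟨hts, hval⟩ | ⟨w, hwW, hts, hval⟩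
  · refine Or.inr ⟨hval, fun w hw hwrite => ?_⟩
    have hwW : w ∈ W := (List.mem_append.1 hw).resolve_right fun hwR =>
      Bool.false_ne_true (hwrite.symm.trans (hR w hwR).1)
    exact hts ▸ (hW w hwW).2.not_ge
  · exact Or.inl ⟨w, List.mem_append_left R hwW, (hW w hwW).1, hts, hval.symm⟩

end Preorder

end Op

theorem constructed_order_legal_general {T : Type} [Preorder T] {S : List (Op T)}
    (hsorted : S.Pairwise Op.Precedes) (hdist : S.Pairwise Op.DistinctWrites)
    (hreads : ∀ r ∈ S, r.isRead = true → (∃ w ∈ S, r.ReadsFrom w) ∨ r.ReadsInitial S) :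
    LegalOps S := by
  intro k hk
  rcases hreads _ (S.get_mem k) hk with ⟨w, hwS, hfrom⟩ | hinit
  · obtain ⟨j, rfl⟩ := List.mem_iff_get.1 hwS
    exact Or.inl ⟨j, hfrom.index_lt hsorted hk, hfrom.1, hfrom.2.2,
      fun l hjl hlk => hfrom.isRead_of_between hsorted hdist hjl hlk⟩
  · exact Or.inr ⟨hinit.1, fun j hjk => hinit.isRead_of_lt hsorted hjk⟩

/-- Let `T` be a linearly ordered set of timestamps with least
element `ts0`.  Let `W` be a finite list of writes, each with a timestamp
`> ts0` and a value, with pairwise distinct timestamps, and let `R` be a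
finite list of reads, each carrying a timestamp and a return value such that
either its timestamp is `ts0` and its return value is `0`, or there is a
write `w ∈ W` with the same timestamp whose value it returns.  Form the
sequential history `S` by ordering the writes in increasing order of
timestamp, placing each read with timestamp `ts0` before all writes, and each
read with timestamp `ts(w)` immediately after write `w` and before any write
with larger timestamp (reads with equal timestamps in an arbitrary order),
i.e. `S` is a permutation of the operations of `W` and `R` sorted by
timestamp with writes placed before reads of equal timestamp.  Then `S` is
legal: every read in `S` returns the value of the closest preceding write, or
the initial value `0` if no write precedes it. -/
theorem constructed_order_legal (T : Type) [LinearOrder T] (ts0 : T)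
    (hts0 : ∀ t : T, ts0 ≤ t)
    (W R S : List (Op T))
    (hW : ∀ w ∈ W, w.isRead = false ∧ ts0 < w.ts)
    (hWdist : W.Pairwise (fun w1 w2 => w1.ts ≠ w2.ts))
    (hR : ∀ r ∈ R, r.isRead = true ∧
      ((r.ts = ts0 ∧ r.value = 0) ∨ ∃ w ∈ W, w.ts = r.ts ∧ r.value = w.value))
    (hperm : S.Perm (W ++ R))
    (hsorted : S.Pairwise (fun a b =>
      a.ts < b.ts ∨ (a.ts = b.ts ∧ ¬(a.isRead = true ∧ b.isRead = false)))) :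
    LegalOps S := by
  have hdist : S.Pairwise Op.DistinctWrites := (hperm.pairwise_iff Op.DistinctWrites.symm).2
    (Op.pairwise_distinctWrites_append hWdist fun r hr => (hR r hr).1)
  have hreads : ∀ r ∈ S, r.isRead = true → (∃ w ∈ S, r.ReadsFrom w) ∨ r.ReadsInitial S := by
    simpa only [Op.ReadsInitial, hperm.mem_iff] using
      fun r => Op.readsFrom_or_readsInitial_append hW hR (r := r)
  exact constructed_order_legal_general hsorted hdist hreads
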